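/- Let A be a unital C*-algebra with a tracial state τ. Suppose x₁, x₂ ∈ A are selfadjoint and α > 0 satisfies ‖[x₁, y]‖₂ + ‖[x₂, y]‖₂ ≥ α ‖y − τ(y)·1‖₂ for every y ∈ A. Then there exist unitary elements u₁, u₂ ∈ A and β > 0 such that ‖[u₁, y]‖₂ + ‖[u₂, y]‖₂ ≥ β ‖y − τ(y)·1‖₂ for every y ∈ A. (In fact one may take u_i = x_i/λ + i·(1 − x_i²/λ²)^{1/2} for any λ > max(‖x₁‖, ‖x₂‖), where the square root is given by continuous functional calculus, and β = α/λ.) -/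

import Mathlib

/-- The trace 2-norm `‖x‖₂ = √(Re τ(x*x))` associated with a tracial state `τ`. -/
noncomputable def traceNorm2 {A : Type*} [NormedRing A] [StarRing A] [NormedAlgebra ℂ A]
    (τ : A →ₗ[ℂ] ℂ) (x : A) : ℝ :=
  Real.sqrt (τ (star x * x)).re

/-!
A selfadjoint `x` with `‖x‖ ≤ c` is `c` times the real part of a unitary `u`. Since
`[u*, y] = -u* [u, y] u*` and `‖·‖₂` is unitarily invariant, `[u, y]` and `[u*, y]` have the same
2-norm, so the 2-norm of `[x, y] = (c / 2) ([u, y] + [u*, y])` is at most `c ‖[u, y]‖₂`. Replacing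
each `xᵢ` by its `uᵢ` therefore costs at most a factor `c` in the gap constant.
-/

open scoped ComplexStarModule

attribute [local instance] LieRing.ofAssociativeRing

theorem star_lie_of_mem_unitary {R : Type*} [Ring R] [StarRing R] {u : R} (hu : u ∈ unitary R)
    (y : R) : ⁅star u, y⁆ = -(star u * ⁅u, y⁆ * star u) := by
  have expand : star u * ⁅u, y⁆ * star u = star u * u * y * star u - star u * y * (u * star u) := by
    rw [Ring.lie_def]
    noncomm_ring
  rw [expand, Unitary.star_mul_self_of_mem hu, Unitary.mul_star_self_of_mem hu, one_mul, mul_one,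
    Ring.lie_def, neg_sub]

section TraceNorm2

variable {A : Type*} [NormedRing A] [StarRing A] [NormedAlgebra ℂ A] {τ : A →ₗ[ℂ] ℂ}

theorem traceNorm2_nonneg (x : A) : 0 ≤ traceNorm2 τ x :=
  Real.sqrt_nonneg _

theorem traceNorm2_neg (x : A) : traceNorm2 τ (-x) = traceNorm2 τ x := by
  rw [traceNorm2, traceNorm2, star_neg, neg_mul_neg]

theorem traceNorm2_smul [StarModule ℂ A] (c : ℂ) (x : A) :
    traceNorm2 τ (c • x) = ‖c‖ * traceNorm2 τ x := by
  have re_eq : (τ (star (c • x) * (c • x))).re = ‖c‖ ^ 2 * (τ (star x * x)).re := by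
    rw [star_smul, smul_mul_smul_comm, map_smul, smul_eq_mul, Complex.star_def,
      Complex.conj_mul', ← Complex.ofReal_pow, Complex.re_ofReal_mul]
  rw [traceNorm2, traceNorm2, re_eq, Real.sqrt_mul (sq_nonneg _), Real.sqrt_sq (norm_nonneg c)]

theorem traceNorm2_unitary_mul {u : A} (hu : u ∈ unitary A) (x : A) :
    traceNorm2 τ (u * x) = traceNorm2 τ x := by
  have star_mul_eq : star (u * x) * (u * x) = star x * (star u * u) * x := by
    simp only [star_mul, mul_assoc]
  rw [traceNorm2, traceNorm2, star_mul_eq, Unitary.star_mul_self_of_mem hu, mul_one]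

theorem traceNorm2_mul_unitary (hτtr : ∀ x y : A, τ (x * y) = τ (y * x)) {u : A}
    (hu : u ∈ unitary A) (x : A) : traceNorm2 τ (x * u) = traceNorm2 τ x := by
  have trace_eq : τ (star (x * u) * (x * u)) = τ (star x * x) :=
    calc τ (star (x * u) * (x * u))
      _ = τ (star u * (star x * x * u)) := by simp only [star_mul, mul_assoc]
      _ = τ (star x * x * (u * star u)) := by rw [hτtr, mul_assoc]
      _ = τ (star x * x) := by rw [Unitary.mul_star_self_of_mem hu, mul_one]
  rw [traceNorm2, traceNorm2, trace_eq]

theorem traceNorm2_star_lie (hτtr : ∀ x y : A, τ (x * y) = τ (y * x)) {u : A}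
    (hu : u ∈ unitary A) (y : A) : traceNorm2 τ ⁅star u, y⁆ = traceNorm2 τ ⁅u, y⁆ := by
  have hu_star : star u ∈ unitary A := Unitary.star_mem hu
  rw [star_lie_of_mem_unitary hu, traceNorm2_neg, traceNorm2_mul_unitary hτtr hu_star,
    traceNorm2_unitary_mul hu_star]

theorem traceNorm2_parallelogram (hτpos : ∀ x : A, 0 ≤ (τ (star x * x)).re) (a b : A) :
    traceNorm2 τ (a + b) ^ 2 + traceNorm2 τ (a - b) ^ 2 =
      2 * (traceNorm2 τ a ^ 2 + traceNorm2 τ b ^ 2) := by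
  have star_mul_eq : star (a + b) * (a + b) + star (a - b) * (a - b) =
      (star a * a + star b * b) + (star a * a + star b * b) := by
    rw [star_add, star_sub]
    noncomm_ring
  have re_eq := congr((τ $star_mul_eq).re)
  simp only [map_add, Complex.add_re] at re_eq
  simp only [traceNorm2, Real.sq_sqrt (hτpos _)]
  linarith

theorem traceNorm2_add_le_two_mul (hτpos : ∀ x : A, 0 ≤ (τ (star x * x)).re) {a b : A}
    (hab : traceNorm2 τ b = traceNorm2 τ a) : traceNorm2 τ (a + b) ≤ 2 * traceNorm2 τ a := by
  refine le_of_sq_le_sq ?_ (by linarith [traceNorm2_nonneg (τ := τ) a])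
  have parallelogram := traceNorm2_parallelogram hτpos a b
  rw [hab] at parallelogram
  linarith [sq_nonneg (traceNorm2 τ (a - b))]

theorem traceNorm2_realPart_lie_le [StarModule ℂ A] (hτpos : ∀ x : A, 0 ≤ (τ (star x * x)).re)
    (hτtr : ∀ x y : A, τ (x * y) = τ (y * x)) {u : A} (hu : u ∈ unitary A) (y : A) :
    traceNorm2 τ ⁅(ℜ u : A), y⁆ ≤ traceNorm2 τ ⁅u, y⁆ := by
  have lie_eq : ⁅(ℜ u : A), y⁆ = (2⁻¹ : ℂ) • (⁅u, y⁆ + ⁅star u, y⁆) :=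
    calc ⁅(ℜ u : A), y⁆
      _ = ⁅(2⁻¹ : ℂ) • (u + star u), y⁆ := by
        rw [realPart_apply_coe, ← Complex.coe_smul, Complex.ofReal_inv, Complex.ofReal_ofNat]
      _ = (2⁻¹ : ℂ) • ⁅u + star u, y⁆ := smul_lie _ _ _
      _ = (2⁻¹ : ℂ) • (⁅u, y⁆ + ⁅star u, y⁆) := congrArg _ (add_lie u (star u) y)
  have add_le := traceNorm2_add_le_two_mul hτpos (traceNorm2_star_lie hτtr hu y)
  rw [lie_eq, traceNorm2_smul, norm_inv, Complex.norm_ofNat]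
  linarith

end TraceNorm2

section CStarAlgebra

variable {A : Type*} [CStarAlgebra A]

theorem exists_mem_unitary_smul_realPart_eq {x : A} (hx : IsSelfAdjoint x) {c : ℝ}
    (hxc : ‖x‖ ≤ c) : ∃ u ∈ unitary A, c • (ℜ u : A) = x := by
  let := CStarAlgebra.spectralOrder A
  have := CStarAlgebra.spectralOrderedRing A
  have hc : 0 ≤ c := (norm_nonneg x).trans hxc
  let a : selfAdjoint A := ⟨c⁻¹ • x, .smul (.all c⁻¹) hx⟩
  have ha : ‖a‖ ≤ 1 := by
    rw [AddSubgroup.coe_norm, norm_smul, norm_inv, Real.norm_of_nonneg hc]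
    exact inv_mul_le_one_of_le₀ hxc hc
  refine ⟨selfAdjoint.unitarySelfAddISMul a ha, SetLike.coe_mem _, ?_⟩
  rw [selfAdjoint.realPart_unitarySelfAddISMul]
  obtain rfl | hc_ne := eq_or_ne c 0
  · rw [zero_smul, norm_le_zero_iff.mp hxc]
  · exact smul_inv_smul₀ hc_ne x

variable {τ : A →ₗ[ℂ] ℂ} {ι : Type*} [Fintype ι]

theorem exists_mem_unitary_traceNorm2_lie_le (hτpos : ∀ x : A, 0 ≤ (τ (star x * x)).re)
    (hτtr : ∀ x y : A, τ (x * y) = τ (y * x)) {x : A} (hx : IsSelfAdjoint x) {c : ℝ}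
    (hxc : ‖x‖ ≤ c) :
    ∃ u ∈ unitary A, ∀ y, traceNorm2 τ ⁅x, y⁆ ≤ c * traceNorm2 τ ⁅u, y⁆ := by
  have hc : 0 ≤ c := (norm_nonneg x).trans hxc
  obtain ⟨u, hu, rfl⟩ := exists_mem_unitary_smul_realPart_eq hx hxc
  refine ⟨u, hu, fun y ↦ ?_⟩
  calc traceNorm2 τ ⁅c • (ℜ u : A), y⁆
    _ = traceNorm2 τ ((c : ℂ) • ⁅(ℜ u : A), y⁆) := congrArg _ (smul_lie (c : ℂ) (ℜ u : A) y)
    _ = c * traceNorm2 τ ⁅(ℜ u : A), y⁆ := by rw [traceNorm2_smul, Complex.norm_of_nonneg hc]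
    _ ≤ c * traceNorm2 τ ⁅u, y⁆ := by
      gcongr
      exact traceNorm2_realPart_lie_le hτpos hτtr hu y

/-- Besides `E y = τ y • 1`, this covers spectral gap relative to a subalgebra, where `E` is the
conditional expectation onto it. -/
theorem exists_unitary_spectral_gap_of_selfAdjoint_spectral_gap_general
    (hτpos : ∀ x : A, 0 ≤ (τ (star x * x)).re) (hτtr : ∀ x y : A, τ (x * y) = τ (y * x))
    (E : A → A) {x : ι → A} (hx : ∀ i, IsSelfAdjoint (x i)) {α : ℝ} (hα : 0 < α)
    (h : ∀ y, α * traceNorm2 τ (y - E y) ≤ ∑ i, traceNorm2 τ ⁅x i, y⁆) :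
    ∃ u : ι → A, (∀ i, u i ∈ unitary A) ∧ ∃ β : ℝ, 0 < β ∧
      ∀ y, β * traceNorm2 τ (y - E y) ≤ ∑ i, traceNorm2 τ ⁅u i, y⁆ := by
  have hc : 0 < ‖x‖ + 1 := by positivity
  have norm_le (i : ι) : ‖x i‖ ≤ ‖x‖ + 1 :=
    (norm_le_pi_norm x i).trans (le_add_of_nonneg_right zero_le_one)
  choose u hu lie_le using fun i ↦
    exists_mem_unitary_traceNorm2_lie_le hτpos hτtr (hx i) (norm_le i)
  refine ⟨u, hu, α / (‖x‖ + 1), by positivity, fun y ↦ ?_⟩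
  rw [div_mul_eq_mul_div, div_le_iff₀' hc, Finset.mul_sum]
  exact (h y).trans (Finset.sum_le_sum fun i _ ↦ lie_le i y)

end CStarAlgebra

/-- If two selfadjoint elements `x₁, x₂` witness a spectral gap
inequality `‖[x₁,y]‖₂ + ‖[x₂,y]‖₂ ≥ α‖y − τ(y)1‖₂`, then two unitaries `u₁, u₂`
witness such an inequality with some constant `β > 0`. -/
theorem exists_unitary_spectral_gap_of_selfAdjoint_spectral_gap
    {A : Type*} [NormedRing A] [StarRing A] [CStarRing A] [CompleteSpace A]
    [NormedAlgebra ℂ A] [StarModule ℂ A]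
    (τ : A →ₗ[ℂ] ℂ)
    (hτ1 : τ 1 = 1)
    (hτpos : ∀ x : A, 0 ≤ (τ (star x * x)).re)
    (hτreal : ∀ x : A, (τ (star x * x)).im = 0)
    (hτtr : ∀ x y : A, τ (x * y) = τ (y * x))
    (x₁ x₂ : A) (hx₁ : star x₁ = x₁) (hx₂ : star x₂ = x₂)
    (α : ℝ) (hα : 0 < α)
    (h : ∀ y : A, α * traceNorm2 τ (y - τ y • 1) ≤
      traceNorm2 τ (x₁ * y - y * x₁) + traceNorm2 τ (x₂ * y - y * x₂)) :
    ∃ u₁ ∈ unitary A, ∃ u₂ ∈ unitary A, ∃ β : ℝ, 0 < β ∧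
      ∀ y : A, β * traceNorm2 τ (y - τ y • 1) ≤
        traceNorm2 τ (u₁ * y - y * u₁) + traceNorm2 τ (u₂ * y - y * u₂) := by
  let : CStarAlgebra A := { }
  obtain ⟨u, hu, β, hβ, gap⟩ := exists_unitary_spectral_gap_of_selfAdjoint_spectral_gap_general
    hτpos hτtr (fun y ↦ τ y • 1) (x := ![x₁, x₂]) (Fin.forall_fin_two.mpr ⟨hx₁, hx₂⟩) hα
    (by simpa only [Fin.sum_univ_two] using! h)
  exact ⟨u 0, hu 0, u 1, hu 1, β, hβ, by simpa only [Fin.sum_univ_two] using! gap⟩
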